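/- arXiv:2311.12206 — 5 statements merged into one kernel-verified Lean document; each statement's English description precedes it below -/
import Mathlib

section
/- For every integrable real random variable X on a probability space and every β ∈ (0,1), the infimum defining CVaR_β[X] is attained at t = VaR_β[X]; that is, CVaR_β[X] = VaR_β[X] + (1-β)⁻¹ · E[(X - VaR_β[X])₊]. -/
open MeasureTheory

lemma aux_int_ind (ν : Measure ℝ) [IsProbabilityMeasure ν] (c s : ℝ) :
    ∫ x, (Set.Ioi s).indicator (fun _ => c) x ∂ν = c * (1 - ProbabilityTheory.cdf ν s) := by
  rw [integral_indicator_const _ measurableSet_Ioi, ProbabilityTheory.cdf_eq_real,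
    ← Set.compl_Iic, probReal_compl_eq_one_sub measurableSet_Iic, smul_eq_mul, mul_comm]

lemma aux_integrable (ν : Measure ℝ) [IsProbabilityMeasure ν] (h : Integrable (fun x : ℝ => x) ν)
    (t : ℝ) : Integrable (fun x : ℝ => max (x - t) 0) ν :=
  (h.sub (integrable_const t)).pos_part

lemma aux_upper (ν : Measure ℝ) [IsProbabilityMeasure ν] (h : Integrable (fun x : ℝ => x) ν)
    (a b : ℝ) (hab : a ≤ b) :
    ∫ x, max (x - a) 0 ∂ν - ∫ x, max (x - b) 0 ∂ν
      ≤ (b - a) * (1 - ProbabilityTheory.cdf ν a) := by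
  rw [← integral_sub (aux_integrable ν h a) (aux_integrable ν h b), ← aux_int_ind]
  refine integral_mono ((aux_integrable ν h a).sub (aux_integrable ν h b))
    ((integrable_const _).indicator measurableSet_Ioi) fun x => ?_
  simp only [Set.indicator_apply, Set.mem_Ioi]
  split_ifs <;> grind

lemma aux_lower (ν : Measure ℝ) [IsProbabilityMeasure ν] (h : Integrable (fun x : ℝ => x) ν)
    (a s b : ℝ) (has : a ≤ s) (hsb : s ≤ b) :
    (s - a) * (1 - ProbabilityTheory.cdf ν s)
      ≤ ∫ x, max (x - a) 0 ∂ν - ∫ x, max (x - b) 0 ∂ν := by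
  rw [← integral_sub (aux_integrable ν h a) (aux_integrable ν h b), ← aux_int_ind]
  refine integral_mono ((integrable_const _).indicator measurableSet_Ioi)
    ((aux_integrable ν h a).sub (aux_integrable ν h b)) fun x => ?_
  simp only [Set.indicator_apply, Set.mem_Ioi]
  split_ifs <;> grind

lemma aux_main (ν : Measure ℝ) [IsProbabilityMeasure ν] (h : Integrable (fun x : ℝ => x) ν)
    (β : ℝ) (hβ : β ∈ Set.Ioo (0 : ℝ) 1) (v : ℝ)
    (hv : v = sInf {t : ℝ | β ≤ ProbabilityTheory.cdf ν t}) (t : ℝ) :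
    v + (1 - β)⁻¹ * ∫ x, max (x - v) 0 ∂ν ≤ t + (1 - β)⁻¹ * ∫ x, max (x - t) 0 ∂ν := by
  obtain ⟨h0, h1⟩ := hβ
  have hne : {t : ℝ | β ≤ ProbabilityTheory.cdf ν t}.Nonempty :=
    (((ProbabilityTheory.tendsto_cdf_atTop ν).eventually (lt_mem_nhds h1)).exists).imp
      fun _ h => h.le
  have hbdd : BddBelow {t : ℝ | β ≤ ProbabilityTheory.cdf ν t} := by
    obtain ⟨m, hm⟩ := ((ProbabilityTheory.tendsto_cdf_atBot ν).eventually (gt_mem_nhds h0)).exists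
    refine ⟨m, fun x hx => ?_⟩
    by_contra! hlt
    exact absurd (hx.trans (ProbabilityTheory.monotone_cdf ν hlt.le)) (not_le.2 hm)
  have hlt : ∀ s < v, ProbabilityTheory.cdf ν s < β := fun s hs => by
    by_contra! hc
    exact absurd (csInf_le hbdd hc) (not_le.2 (hv ▸ hs))
  have hge : β ≤ ProbabilityTheory.cdf ν v := by
    have hr := ((ProbabilityTheory.cdf ν).right_continuous v).mono Set.Ioi_subset_Ici_self
    refine ge_of_tendsto hr ?_
    filter_upwards [self_mem_nhdsWithin] with s hs
    obtain ⟨r, hr, hrs⟩ := exists_lt_of_csInf_lt hne (hv ▸ hs : sInf _ < s)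
    exact le_trans hr (ProbabilityTheory.monotone_cdf ν hrs.le)
  have hb : 0 < 1 - β := by linarith
  suffices hh : (v - t) * (1 - β) ≤ ∫ x, max (x - t) 0 ∂ν - ∫ x, max (x - v) 0 ∂ν by
    rw [← le_div_iff₀ hb, div_eq_inv_mul] at hh
    linarith
  rcases le_or_gt v t with hvt | htv
  · have := aux_upper ν h v t hvt
    nlinarith
  · rw [← le_div_iff₀ hb, sub_le_iff_le_add]
    refine le_of_forall_lt_imp_le_of_dense fun s hs => ?_
    rw [← sub_le_iff_le_add, le_div_iff₀ hb]
    rcases le_or_gt t s with hts | hst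
    · have := aux_lower ν h t s v hts hs.le
      have := hlt s hs
      nlinarith
    · have := aux_lower ν h t t v le_rfl htv.le
      nlinarith



/-- The infimum defining `CVaR_β[X]` is attained at `t = VaR_β[X]`:
`CVaR_β[X] = VaR_β[X] + (1-β)⁻¹ E[(X - VaR_β[X])₊]`. -/
theorem cvar_eq_at_var
    {Ω : Type*} [MeasurableSpace Ω] (μ : Measure Ω) [IsProbabilityMeasure μ]
    (X : Ω → ℝ) (hX : Integrable X μ) (β : ℝ) (hβ : β ∈ Set.Ioo (0 : ℝ) 1) :
    (⨅ t : ℝ, (t + (1 - β)⁻¹ * ∫ ω, max (X ω - t) 0 ∂μ)) =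
      sInf {t : ℝ | β ≤ (μ {ω | X ω ≤ t}).toReal} +
        (1 - β)⁻¹ *
          ∫ ω, max (X ω - sInf {t : ℝ | β ≤ (μ {ω | X ω ≤ t}).toReal}) 0 ∂μ := by
  have hm := hX.aemeasurable
  haveI : IsProbabilityMeasure (μ.map X) := Measure.isProbabilityMeasure_map hm
  have hid : Integrable (fun x : ℝ => x) (μ.map X) :=
    (integrable_map_measure (by fun_prop) hm).2 hX
  have hc : ∀ t : ℝ, (μ {ω | X ω ≤ t}).toReal = ProbabilityTheory.cdf (μ.map X) t := fun t => by
    rw [ProbabilityTheory.cdf_eq_real, Measure.real,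
      Measure.map_apply_of_aemeasurable hm measurableSet_Iic]
    rfl
  have hi : ∀ t : ℝ, ∫ ω, max (X ω - t) 0 ∂μ = ∫ x, max (x - t) 0 ∂(μ.map X) := fun t =>
    (integral_map hm (f := fun x : ℝ => max (x - t) 0) (by fun_prop)).symm
  simp only [hc, hi]
  have key := aux_main (μ.map X) hid β hβ _ rfl
  exact le_antisymm (ciInf_le ⟨_, Set.forall_mem_range.2 key⟩ _) (le_ciInf key)
end

section
/- Let X be an integrable real random variable and β ∈ (0,1). If ℙ[X ≤ VaR_β[X]] = β (in particular if the cumulative distribution function of X is continuous and takes the value β), then CVaR_β[X] = (1-β)⁻¹ · E[X · 1_{X > VaR_β[X]}], i.e. CVaR_β[X] is the average of the β-tail of the distribution of X. -/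
open MeasureTheory

theorem cvar_aux
    {Ω : Type*} [MeasurableSpace Ω] (μ : Measure Ω) [IsProbabilityMeasure μ]
    (X : Ω → ℝ) (hX : Integrable X μ) (β : ℝ) (hβ : β ∈ Set.Ioo (0 : ℝ) 1) (v : ℝ)
    (hcdf : (μ {ω | X ω ≤ v}).toReal = β) :
    (⨅ t : ℝ, (t + (1 - β)⁻¹ * ∫ ω, max (X ω - t) 0 ∂μ)) =
      (1 - β)⁻¹ * ∫ ω, Set.indicator {ω | v < X ω} X ω ∂μ := by
  have hb : 0 < 1 - β := by linarith [hβ.2]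
  have hA : NullMeasurableSet {ω | v < X ω} μ :=
    nullMeasurableSet_lt aemeasurable_const hX.aemeasurable
  have hB : NullMeasurableSet {ω | X ω ≤ v} μ :=
    nullMeasurableSet_le hX.aemeasurable aemeasurable_const
  have hAm : μ.real {ω | v < X ω} = 1 - β := by
    have h1 : {ω | v < X ω} = {ω | X ω ≤ v}ᶜ := by ext; simp
    rw [h1, measureReal_compl₀ hB]
    simp [Measure.real, hcdf]
  have key : ∀ t : ℝ, ∫ ω, Set.indicator {ω | v < X ω} (fun ω => X ω - t) ω ∂μ
      = ∫ ω, Set.indicator {ω | v < X ω} X ω ∂μ - (1 - β) * t := by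
    intro t
    rw [integral_indicator₀ hA, integral_indicator₀ hA,
      integral_sub hX.integrableOn (integrable_const t)]
    simp [hAm]
  have hint : ∀ t : ℝ, Integrable (fun ω => X ω - t) μ := fun t => hX.sub (integrable_const t)
  have lower : ∀ t : ℝ, (1 - β)⁻¹ * ∫ ω, Set.indicator {ω | v < X ω} X ω ∂μ
      ≤ t + (1 - β)⁻¹ * ∫ ω, max (X ω - t) 0 ∂μ := by
    intro t
    have h : ∫ ω, Set.indicator {ω | v < X ω} (fun ω => X ω - t) ω ∂μ
        ≤ ∫ ω, max (X ω - t) 0 ∂μ := by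
      refine integral_mono ((hint t).indicator₀ hA) (hint t).pos_part fun ω => ?_
      by_cases h : v < X ω <;> simp [Set.indicator, h]
    rw [key] at h
    have h2 := mul_le_mul_of_nonneg_left h (inv_pos.2 hb).le
    rw [mul_sub, inv_mul_cancel_left₀ hb.ne'] at h2
    linarith
  have attain : v + (1 - β)⁻¹ * ∫ ω, max (X ω - v) 0 ∂μ
      = (1 - β)⁻¹ * ∫ ω, Set.indicator {ω | v < X ω} X ω ∂μ := by
    have h : ∫ ω, max (X ω - v) 0 ∂μ
        = ∫ ω, Set.indicator {ω | v < X ω} (fun ω => X ω - v) ω ∂μ := by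
      congr 1
      ext ω
      by_cases h : v < X ω
      · simp [Set.indicator, h, h.le]
      · simp [Set.indicator, h, not_lt.1 h]
    rw [h, key, mul_sub, inv_mul_cancel_left₀ hb.ne']
    ring
  apply le_antisymm
  · rw [← attain]
    exact ciInf_le ⟨_, by rintro _ ⟨t, rfl⟩; exact lower t⟩ v
  · exact le_ciInf lower

/-- If `ℙ[X ≤ VaR_β[X]] = β`, then `CVaR_β[X]` is the average of the `β`-tail of the
distribution of `X`: `CVaR_β[X] = (1-β)⁻¹ E[X · 1_{X > VaR_β[X]}]`. -/
theorem cvar_eq_tail_average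
    {Ω : Type*} [MeasurableSpace Ω] (μ : Measure Ω) [IsProbabilityMeasure μ]
    (X : Ω → ℝ) (hX : Integrable X μ) (β : ℝ) (hβ : β ∈ Set.Ioo (0 : ℝ) 1)
    (hcdf : (μ {ω | X ω ≤ sInf {t : ℝ | β ≤ (μ {ω | X ω ≤ t}).toReal}}).toReal = β) :
    (⨅ t : ℝ, (t + (1 - β)⁻¹ * ∫ ω, max (X ω - t) 0 ∂μ)) =
      (1 - β)⁻¹ *
        ∫ ω, Set.indicator
          {ω | sInf {t : ℝ | β ≤ (μ {ω | X ω ≤ t}).toReal} < X ω} X ω ∂μ := by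
  exact cvar_aux μ X hX β hβ _ hcdf
end

section
/- CVaR_β is subadditive (and hence, together with monotonicity, translation equivariance and positive homogeneity, a coherent risk measure): for all integrable real random variables X and Y on a common probability space and every β ∈ (0,1), CVaR_β[X + Y] ≤ CVaR_β[X] + CVaR_β[Y]. -/
open MeasureTheory

/-- Subadditivity of `CVaR_β`: `CVaR_β[X + Y] ≤ CVaR_β[X] + CVaR_β[Y]`. -/
theorem cvar_subadditive
    {Ω : Type*} [MeasurableSpace Ω] (μ : Measure Ω) [IsProbabilityMeasure μ]
    (X Y : Ω → ℝ) (hX : Integrable X μ) (hY : Integrable Y μ)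
    (β : ℝ) (hβ : β ∈ Set.Ioo (0 : ℝ) 1) :
    (⨅ t : ℝ, (t + (1 - β)⁻¹ * ∫ ω, max ((X ω + Y ω) - t) 0 ∂μ)) ≤
      (⨅ t : ℝ, (t + (1 - β)⁻¹ * ∫ ω, max (X ω - t) 0 ∂μ)) +
        ⨅ t : ℝ, (t + (1 - β)⁻¹ * ∫ ω, max (Y ω - t) 0 ∂μ) := by
  obtain ⟨h0, h1⟩ := hβ
  have hc : 1 ≤ (1 - β)⁻¹ := (one_le_inv₀ (by linarith)).2 (by linarith)
  have hint : ∀ (Z : Ω → ℝ), Integrable Z μ → ∀ t : ℝ,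
      Integrable (fun ω => max (Z ω - t) 0) μ := fun Z hZ t =>
    (hZ.sub (integrable_const t)).pos_part
  have hXY : Integrable (fun ω => X ω + Y ω) μ := hX.add hY
  apply le_ciInf_add_ciInf
  intro s t
  have hb : BddBelow (Set.range fun t : ℝ =>
      t + (1 - β)⁻¹ * ∫ ω, max ((X ω + Y ω) - t) 0 ∂μ) := by
    refine ⟨∫ ω, (X ω + Y ω) ∂μ, ?_⟩
    rintro _ ⟨u, rfl⟩
    have e1 : ∫ ω, ((X ω + Y ω) - u) ∂μ ≤ ∫ ω, max ((X ω + Y ω) - u) 0 ∂μ :=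
      integral_mono (hXY.sub (integrable_const u)) (hint _ hXY u) fun ω => le_max_left _ _
    have e2 : 0 ≤ ∫ ω, max ((X ω + Y ω) - u) 0 ∂μ :=
      integral_nonneg fun ω => le_max_right _ _
    rw [integral_sub hXY (integrable_const u)] at e1
    simp only [integral_const, probReal_univ, one_smul] at e1
    have e3 := mul_le_mul_of_nonneg_right hc e2
    show _ ≤ u + _
    linarith
  refine (ciInf_le hb (s + t)).trans ?_
  have e : ∫ ω, max ((X ω + Y ω) - (s + t)) 0 ∂μ ≤
      ∫ ω, max (X ω - s) 0 ∂μ + ∫ ω, max (Y ω - t) 0 ∂μ := by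
    rw [← integral_add (hint X hX s) (hint Y hY t)]
    refine integral_mono (hint _ hXY (s + t)) ((hint X hX s).add (hint Y hY t)) fun ω => ?_
    show max ((X ω + Y ω) - (s + t)) 0 ≤ max (X ω - s) 0 + max (Y ω - t) 0
    have a1 := le_max_left (X ω - s) 0
    have a2 := le_max_right (X ω - s) 0
    have a3 := le_max_left (Y ω - t) 0
    have a4 := le_max_right (Y ω - t) 0
    apply max_le <;> linarith
  have e3 := mul_le_mul_of_nonneg_left e (zero_le_one.trans hc)
  rw [mul_add] at e3
  linarith
end

section
/- Let X be an integrable real random variable and t ∈ ℝ a point with ℙ[X = t] = 0. Then the function h(s) := E[(X - s)₊] is differentiable at s = t with h'(t) = -ℙ[X > t]; consequently, for β ∈ (0,1), the Rockafellar–Uryasev function g(s) := s + (1-β)⁻¹ E[(X - s)₊] is differentiable at t with g'(t) = 1 - (1-β)⁻¹ ℙ[X ≥ t]. -/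
open MeasureTheory

/-- If `ℙ[X = t] = 0`, then `h(s) = E[(X - s)₊]` is differentiable at `t` with
`h'(t) = -ℙ[X > t]`, and consequently the Rockafellar–Uryasev function
`g(s) = s + (1-β)⁻¹ E[(X - s)₊]` is differentiable at `t` with
`g'(t) = 1 - (1-β)⁻¹ ℙ[X ≥ t]`. -/
theorem rockafellar_uryasev_deriv
    {Ω : Type*} [MeasurableSpace Ω] (μ : Measure Ω) [IsProbabilityMeasure μ]
    (X : Ω → ℝ) (hX : Integrable X μ) (t : ℝ) (ht : μ {ω | X ω = t} = 0)
    (β : ℝ) (hβ : β ∈ Set.Ioo (0 : ℝ) 1) :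
    HasDerivAt (fun s : ℝ => ∫ ω, max (X ω - s) 0 ∂μ)
        (-(μ {ω | t < X ω}).toReal) t ∧
      HasDerivAt (fun s : ℝ => s + (1 - β)⁻¹ * ∫ ω, max (X ω - s) 0 ∂μ)
        (1 - (1 - β)⁻¹ * (μ {ω | t ≤ X ω}).toReal) t := by
  have hnull : NullMeasurableSet {ω | t < X ω} μ :=
    nullMeasurableSet_lt aemeasurable_const hX.aestronglyMeasurable.aemeasurable
  have hint : ∀ s : ℝ, Integrable (fun ω => max (X ω - s) 0) μ := fun s =>
    (hX.sub (integrable_const s)).pos_part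
  have hne : ∀ᵐ ω ∂μ, X ω ≠ t := by
    rw [ae_iff]
    simpa using ht
  have h1 : HasDerivAt (fun s : ℝ => ∫ ω, max (X ω - s) 0 ∂μ)
      (-(μ {ω | t < X ω}).toReal) t := by
    have key := (hasDerivAt_integral_of_dominated_loc_of_lip (μ := μ) (𝕜 := ℝ)
      (F := fun s ω => max (X ω - s) 0) (x₀ := t) (s := Set.univ)
      (F' := Set.indicator {ω | t < X ω} (fun _ => (-1 : ℝ))) (bound := fun _ => (1 : ℝ))
      Filter.univ_mem
      (Filter.Eventually.of_forall fun s => (hint s).aestronglyMeasurable) (hint t)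
      ((aestronglyMeasurable_const).indicator₀ hnull) ?_ (integrable_const _) ?_).2
    · rw [integral_indicator₀ hnull] at key
      simpa [Measure.real] using key
    · refine Filter.Eventually.of_forall fun ω => ?_
      refine LipschitzOnWith.of_dist_le_mul fun x _ y _ => ?_
      have := abs_max_sub_max_le_abs (X ω - x) (X ω - y) 0
      simp only [Real.dist_eq]
      have e : X ω - x - (X ω - y) = -(x - y) := by ring
      rw [e, abs_neg] at this
      simpa using this
    · filter_upwards [hne] with ω hω
      rcases lt_or_gt_of_ne hω with h | h
      · rw [Set.indicator_of_notMem (by simpa using h.le)]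
        refine (hasDerivAt_const t (0 : ℝ)).congr_of_eventuallyEq ?_
        filter_upwards [lt_mem_nhds h] with s hs
        exact max_eq_right (by linarith)
      · rw [Set.indicator_of_mem (by simpa using h)]
        refine ((hasDerivAt_id t).const_sub (X ω)).congr_of_eventuallyEq ?_
        filter_upwards [gt_mem_nhds h] with s hs
        exact max_eq_left (by linarith)
  refine ⟨h1, ?_⟩
  have hset : μ {ω | t ≤ X ω} = μ {ω | t < X ω} := by
    refine measure_congr ?_
    filter_upwards [hne] with ω hω
    exact propext ⟨fun h => lt_of_le_of_ne h (Ne.symm hω), fun h => le_of_lt h⟩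
  rw [hset]
  have h2 := (hasDerivAt_id' t).fun_add (h1.const_mul (1 - β)⁻¹)
  rw [mul_neg, ← sub_eq_add_neg] at h2
  exact h2
end

section
/- A point t ∈ ℝ minimizes the Rockafellar–Uryasev function g(s) := s + (1-β)⁻¹ E[(X - s)₊] over s ∈ ℝ if and only if ℙ[X < t] ≤ β ≤ ℙ[X ≤ t]; i.e. the set of minimizers is exactly the set of β-quantiles of X. -/
open MeasureTheory

theorem ru_aux {Ω : Type*} [MeasurableSpace Ω] (μ : Measure Ω) [IsProbabilityMeasure μ]
    (X : Ω → ℝ) (hX : Integrable X μ) (a b : ℝ) (hab : a < b) :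
    (b - a) * μ.real {ω | b ≤ X ω} ≤
        (∫ ω, max (X ω - a) 0 ∂μ) - ∫ ω, max (X ω - b) 0 ∂μ ∧
      (∫ ω, max (X ω - a) 0 ∂μ) - (∫ ω, max (X ω - b) 0 ∂μ) ≤
        (b - a) * μ.real {ω | a < X ω} := by
  have hi : ∀ c : ℝ, Integrable (fun ω => max (X ω - c) 0) μ := fun c =>
    (hX.sub (integrable_const c)).pos_part
  have h1 : NullMeasurableSet {ω | b ≤ X ω} μ :=
    nullMeasurableSet_le aemeasurable_const hX.aemeasurable
  have h2 : NullMeasurableSet {ω | a < X ω} μ :=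
    nullMeasurableSet_lt aemeasurable_const hX.aemeasurable
  have e : ∀ S : Set Ω, NullMeasurableSet S μ →
      Integrable (S.indicator fun _ => b - a) μ ∧
      ∫ ω, S.indicator (fun _ => b - a) ω ∂μ = (b - a) * μ.real S := by
    intro S hS
    refine ⟨(integrable_const (b - a)).indicator₀ hS, ?_⟩
    rw [integral_indicator₀ hS]
    simp [mul_comm]
  rw [← integral_sub (hi a) (hi b), ← (e _ h1).2, ← (e _ h2).2]
  constructor
  · refine integral_mono (e _ h1).1 ((hi a).sub (hi b)) fun ω => ?_
    simp only [Set.indicator, Set.mem_setOf_eq, Pi.sub_apply]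
    grind
  · refine integral_mono ((hi a).sub (hi b)) (e _ h2).1 fun ω => ?_
    simp only [Set.indicator, Set.mem_setOf_eq, Pi.sub_apply]
    grind

theorem ru_union {Ω : Type*} [MeasurableSpace Ω] (μ : Measure Ω) [IsProbabilityMeasure μ]
    (X : Ω → ℝ) (c t : ℝ) (hc : 0 ≤ c) (h : ∀ s < t, μ.real {ω | X ω ≤ s} ≤ c) :
    μ.real {ω | X ω < t} ≤ c := by
  have hu : {ω | X ω < t} = ⋃ n : ℕ, {ω | X ω ≤ t - 1 / ((n : ℝ) + 1)} := by
    ext ω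
    simp only [Set.mem_setOf_eq, Set.mem_iUnion]
    constructor
    · intro hω
      obtain ⟨n, hn⟩ := exists_nat_one_div_lt (sub_pos.2 hω)
      exact ⟨n, by linarith⟩
    · rintro ⟨n, hn⟩
      have : 0 < 1 / ((n : ℝ) + 1) := Nat.one_div_pos_of_nat
      linarith
  have hm : Monotone fun n : ℕ => {ω | X ω ≤ t - 1 / ((n : ℝ) + 1)} := by
    intro m n hmn ω hω
    simp only [Set.mem_setOf_eq] at hω ⊢
    have := Nat.one_div_le_one_div (α := ℝ) hmn
    linarith
  refine ENNReal.toReal_le_of_le_ofReal hc ?_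
  rw [hu, hm.measure_iUnion]
  refine iSup_le fun n => ?_
  rw [ENNReal.le_ofReal_iff_toReal_le (measure_ne_top _ _) hc]
  have : 0 < 1 / ((n : ℝ) + 1) := Nat.one_div_pos_of_nat
  exact h _ (by linarith)

/-- `t` minimizes the Rockafellar–Uryasev function `g(s) = s + (1-β)⁻¹ E[(X - s)₊]`
over `s ∈ ℝ` if and only if `t` is a `β`-quantile of `X`, i.e.
`ℙ[X < t] ≤ β ≤ ℙ[X ≤ t]`. -/
theorem rockafellar_uryasev_minimizers
    {Ω : Type*} [MeasurableSpace Ω] (μ : Measure Ω) [IsProbabilityMeasure μ]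
    (X : Ω → ℝ) (hX : Integrable X μ) (β : ℝ) (hβ : β ∈ Set.Ioo (0 : ℝ) 1) (t : ℝ) :
    (∀ s : ℝ, (t + (1 - β)⁻¹ * ∫ ω, max (X ω - t) 0 ∂μ) ≤
        s + (1 - β)⁻¹ * ∫ ω, max (X ω - s) 0 ∂μ) ↔
      (μ {ω | X ω < t}).toReal ≤ β ∧ β ≤ (μ {ω | X ω ≤ t}).toReal := by
  obtain ⟨h0, h1⟩ := hβ
  have hb : 0 < 1 - β := by linarith
  have key : ∀ s : ℝ, ((t + (1 - β)⁻¹ * ∫ ω, max (X ω - t) 0 ∂μ) ≤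
        s + (1 - β)⁻¹ * ∫ ω, max (X ω - s) 0 ∂μ) ↔
      (t - s) * (1 - β) ≤ (∫ ω, max (X ω - s) 0 ∂μ) - ∫ ω, max (X ω - t) 0 ∂μ := by
    intro s
    rw [← le_div_iff₀ hb, div_eq_inv_mul, mul_sub]
    constructor <;> intro h <;> linarith
  have c1 : ∀ s : ℝ, μ.real {ω | s ≤ X ω} = 1 - μ.real {ω | X ω < s} := by
    intro s
    rw [← probReal_compl_eq_one_sub₀ (nullMeasurableSet_lt hX.aemeasurable aemeasurable_const)]
    congr 1; ext ω; simp
  have c2 : ∀ s : ℝ, μ.real {ω | s < X ω} = 1 - μ.real {ω | X ω ≤ s} := by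
    intro s
    rw [← probReal_compl_eq_one_sub₀ (nullMeasurableSet_le hX.aemeasurable aemeasurable_const)]
    congr 1; ext ω; simp
  change _ ↔ μ.real {ω | X ω < t} ≤ β ∧ β ≤ μ.real {ω | X ω ≤ t}
  simp only [key]
  constructor
  · intro h
    constructor
    · refine ru_union μ X β t h0.le fun s hs => ?_
      have a := (ru_aux μ X hX s t hs).2
      rw [c2] at a
      have := le_of_mul_le_mul_left ((h s).trans a) (sub_pos.2 hs)
      linarith
    · have := ru_union μ (fun ω => - X ω) (1 - β) (-t) hb.le fun s hs => by
        have hs' : t < -s := by linarith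
        have a := (ru_aux μ X hX t (-s) hs').1
        have e : {ω | - X ω ≤ s} = {ω | -s ≤ X ω} := by
          ext ω; simp only [Set.mem_setOf_eq]; exact neg_le
        rw [e]
        have b := h (-s)
        refine le_of_mul_le_mul_left (a := -s - t) ?_ (by linarith)
        linarith
      simp only [neg_lt_neg_iff] at this
      rw [c2] at this
      linarith
  · rintro ⟨ha, hb'⟩ s
    rcases lt_trichotomy s t with hs | rfl | hs
    · have a := (ru_aux μ X hX s t hs).1
      rw [c1] at a
      nlinarith
    · simp
    · have a := (ru_aux μ X hX t s hs).2
      rw [c2] at a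
      nlinarith
end
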